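/- Gauss's constant relation: 2 θ₄(e^{-π})² = Γ(1/4)/(Γ(1/2) Γ(3/4)); equivalently θ₄(e^{-π})² = Γ(1/4)/(2 Γ(1/2) Γ(3/4)). -/

import Mathlib

noncomputable section

/-- Theta-null `θ₂(q) = ∑_{k∈ℤ} q^{(k+1/2)²}`. -/
def theta2 (q : ℝ) : ℝ := ∑' k : ℤ, q ^ (((k : ℝ) + 1/2)^2)

/-- Theta-null `θ₃(q) = ∑_{k∈ℤ} q^{k²}`. -/
def theta3 (q : ℝ) : ℝ := ∑' k : ℤ, q ^ (k^2)

/-- Theta-null `θ₄(q) = ∑_{k∈ℤ} (-1)^k q^{k²}`. -/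
def theta4 (q : ℝ) : ℝ := ∑' k : ℤ, (-1 : ℝ) ^ k * q ^ (k^2)

/-- Jacobi theta function `θ₃(z,q) = ∑_{k∈ℤ} q^{k²} e^{2πikz}` (real-valued for real z, q∈(0,1)). -/
def jTheta3 (z q : ℝ) : ℝ :=
  (∑' k : ℤ, (q : ℂ) ^ (k^2) * Complex.exp (2 * Real.pi * Complex.I * k * z)).re

/-- Jacobi theta function as a complex number. -/
def jTheta3C (z q : ℝ) : ℂ :=
  ∑' k : ℤ, (q : ℂ) ^ (k^2) * Complex.exp (2 * Real.pi * Complex.I * k * z)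

/-- Gauss hypergeometric series `₂F₁(a,b;c;x)`. -/
def hyp2F1 (a b c x : ℝ) : ℝ :=
  ∑' n : ℕ, ((ascPochhammer ℝ n).eval a * (ascPochhammer ℝ n).eval b /
    (ascPochhammer ℝ n).eval c) * x ^ n / (n.factorial : ℝ)

/-- Borwein cubic theta function `a(q)`. -/
def borA (q : ℝ) : ℝ := ∑' p : ℤ × ℤ, q ^ (p.1^2 + p.1 * p.2 + p.2^2)

/-- Borwein cubic theta function `b(q)` (real-valued). -/
def borB (q : ℝ) : ℝ :=
  (∑' p : ℤ × ℤ, (q : ℂ) ^ (p.1^2 + p.1 * p.2 + p.2^2) *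
    Complex.exp (2 * Real.pi * Complex.I * (((p.1 : ℝ) - (p.2 : ℝ)) / 3))).re

/-- Borwein cubic theta function `c(q)`. -/
def borC (q : ℝ) : ℝ :=
  ∑' p : ℤ × ℤ, q ^ ((((p.1 : ℝ)) + 1/3)^2 + ((p.1 : ℝ) + 1/3) * ((p.2 : ℝ) + 1/3) +
    (((p.2 : ℝ)) + 1/3)^2)

/-- Periodized Gaussian (heat kernel) on the torus ℝ²/(Sℤ²). -/
def heatK (S : Matrix.SpecialLinearGroup (Fin 2) ℝ) (t : ℝ) (z : Fin 2 → ℝ) : ℝ :=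
  (1/t) * ∑' l : Fin 2 → ℤ,
    Real.exp (-(Real.pi / t) *
      (((S : Matrix (Fin 2) (Fin 2) ℝ).mulVec (fun i => (l i : ℝ) + z i) 0)^2 +
       ((S : Matrix (Fin 2) (Fin 2) ℝ).mulVec (fun i => (l i : ℝ) + z i) 1)^2))

end

theorem gcr_sum3 {q : ℝ} (h0 : 0 < q) (h1 : q < 1) : Summable (fun k : ℤ => q ^ (k^2)) := by
  have key : Summable (fun n : ℕ => q ^ (((n:ℤ))^2)) := by
    refine Summable.of_nonneg_of_le (fun n => by positivity) (fun n => ?_)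
      (summable_geometric_of_lt_one h0.le h1)
    have : q ^ (((n:ℤ))^2) = q ^ (n^2) := by exact_mod_cast zpow_natCast q (n^2)
    rw [this]
    exact pow_le_pow_of_le_one h0.le h1.le (Nat.le_self_pow (by norm_num) n)
  refine Summable.of_nat_of_neg key ?_
  simpa using key

theorem gcr_abs4 {q : ℝ} (h0 : 0 < q) (k : ℤ) : ‖(-1 : ℝ) ^ k * q ^ (k^2)‖ = q ^ (k^2) := by
  rw [norm_mul, norm_zpow, norm_neg, norm_one, one_zpow, one_mul, Real.norm_of_nonneg (by positivity)]

theorem gcr_abs3 {q : ℝ} (h0 : 0 < q) (k : ℤ) : ‖q ^ (k^2)‖ = q ^ (k^2) := by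
  rw [Real.norm_of_nonneg (by positivity)]

theorem gcr_sum4 {q : ℝ} (h0 : 0 < q) (h1 : q < 1) :
    Summable (fun k : ℤ => ‖(-1 : ℝ) ^ k * q ^ (k^2)‖) := by
  simpa only [gcr_abs4 h0] using gcr_sum3 h0 h1

theorem gcr_sum3n {q : ℝ} (h0 : 0 < q) (h1 : q < 1) :
    Summable (fun k : ℤ => ‖q ^ (k^2)‖) := by
  simpa only [gcr_abs3 h0] using gcr_sum3 h0 h1

theorem gcr_lattice (f : ℤ × ℤ → ℝ) (hf : ∀ p : ℤ × ℤ, Odd (p.1 + p.2) → f p = 0) :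
    ∑' p : ℤ × ℤ, f (p.1 + p.2, p.1 - p.2) = ∑' p, f p := by
  refine Function.Injective.tsum_eq (g := fun p : ℤ × ℤ => (p.1 + p.2, p.1 - p.2)) ?_ ?_
  · rintro ⟨a, b⟩ ⟨c, d⟩ h
    simp only [Prod.mk.injEq] at h ⊢
    omega
  · rintro ⟨m, n⟩ h
    have : ¬ Odd (m + n) := fun h' => h (hf (m, n) h')
    rw [Int.not_odd_iff_even] at this
    obtain ⟨a, ha⟩ := this
    exact ⟨(a, m - a), by simp only [Prod.mk.injEq]; omega⟩

theorem gcr_sign (m n : ℤ) : (-1:ℝ)^m * (-1:ℝ)^n = (-1:ℝ)^(m+n) :=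
  (zpow_add₀ (by norm_num) m n).symm

theorem gcr_id1 {q : ℝ} (h0 : 0 < q) (h1 : q < 1) :
    theta3 q ^ 2 + theta4 q ^ 2 = 2 * theta3 (q ^ 2) ^ 2 := by
  have h0' : 0 < q ^ 2 := by positivity
  have h1' : q ^ 2 < 1 := by nlinarith
  unfold theta3 theta4
  rw [sq, sq, sq, tsum_mul_tsum_of_summable_norm (gcr_sum3n h0 h1) (gcr_sum3n h0 h1),
    tsum_mul_tsum_of_summable_norm (gcr_sum4 h0 h1) (gcr_sum4 h0 h1),
    tsum_mul_tsum_of_summable_norm (gcr_sum3n h0' h1') (gcr_sum3n h0' h1'),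
    ← Summable.tsum_add (summable_mul_of_summable_norm (gcr_sum3n h0 h1) (gcr_sum3n h0 h1))
      (summable_mul_of_summable_norm (gcr_sum4 h0 h1) (gcr_sum4 h0 h1)), ← tsum_mul_left,
    ← gcr_lattice]
  · refine tsum_congr fun ⟨a, b⟩ => ?_
    simp only
    have e1 : (-1:ℝ)^(a+b) * (-1:ℝ)^(a-b) = 1 := by
      rw [gcr_sign]; exact Even.neg_one_zpow ⟨a, by ring⟩
    have e2 : q ^ ((a+b)^2) * q ^ ((a-b)^2) = (q^2)^(a^2) * (q^2)^(b^2) := by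
      rw [← zpow_add₀ h0.ne', ← zpow_add₀ h0'.ne', ← zpow_natCast q 2, ← zpow_mul]
      congr 1; push_cast; ring
    linear_combination e2 + q ^ ((a+b)^2) * q ^ ((a-b)^2) * e1 + e2
  · rintro ⟨m, n⟩ h
    simp only at h ⊢
    have e1 : (-1:ℝ)^m * (-1:ℝ)^n = -1 := by
      rw [gcr_sign]; exact Odd.neg_one_zpow h
    linear_combination q ^ (m^2) * q ^ (n^2) * e1

theorem gcr_id2 {q : ℝ} (h0 : 0 < q) (h1 : q < 1) :
    theta3 q * theta4 q = theta4 (q ^ 2) ^ 2 := by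
  have h0' : 0 < q ^ 2 := by positivity
  have h1' : q ^ 2 < 1 := by nlinarith
  suffices H : theta3 q * theta4 q + theta4 q * theta3 q = 2 * theta4 (q ^ 2) ^ 2 by linarith
  unfold theta3 theta4
  rw [sq (∑' k : ℤ, _), tsum_mul_tsum_of_summable_norm (gcr_sum3n h0 h1) (gcr_sum4 h0 h1),
    tsum_mul_tsum_of_summable_norm (gcr_sum4 h0 h1) (gcr_sum3n h0 h1),
    tsum_mul_tsum_of_summable_norm (gcr_sum4 h0' h1') (gcr_sum4 h0' h1'),
    ← Summable.tsum_add (summable_mul_of_summable_norm (gcr_sum3n h0 h1) (gcr_sum4 h0 h1))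
      (summable_mul_of_summable_norm (gcr_sum4 h0 h1) (gcr_sum3n h0 h1)), ← tsum_mul_left,
    ← gcr_lattice]
  · refine tsum_congr fun ⟨a, b⟩ => ?_
    simp only
    have e1 : (-1:ℝ)^(a-b) = (-1:ℝ)^(a+b) := by
      have : (-1:ℝ)^(a+b) = (-1:ℝ)^(a-b) * (-1:ℝ)^(2*b) := by
        rw [gcr_sign]; congr 1; ring
      rw [this, Even.neg_one_zpow (⟨b, by ring⟩ : Even (2*b)), mul_one]
    have e2 : q ^ ((a+b)^2) * q ^ ((a-b)^2) = (q^2)^(a^2) * (q^2)^(b^2) := by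
      rw [← zpow_add₀ h0.ne', ← zpow_add₀ h0'.ne', ← zpow_natCast q 2, ← zpow_mul]
      congr 1; push_cast; ring
    rw [e1]
    have e3 := gcr_sign a b
    linear_combination 2 * (-1:ℝ)^(a+b) * e2 - 2 * (q^2)^(a^2) * (q^2)^(b^2) * e3
  · rintro ⟨m, n⟩ h
    simp only at h ⊢
    have e1 : (-1:ℝ)^m * (-1:ℝ)^n = -1 := by
      rw [gcr_sign]; exact Odd.neg_one_zpow h
    have e3 : (-1:ℝ)^m * (-1:ℝ)^m = 1 := by
      rw [gcr_sign]; exact Even.neg_one_zpow ⟨m, rfl⟩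
    have e2 : (-1:ℝ)^n = - (-1:ℝ)^m := by
      linear_combination (-1:ℝ)^m * e1 - (-1:ℝ)^n * e3
    rw [e2]; ring

theorem gcr_lim (s : ℤ → ℝ) (hs : ∀ k, |s k| = 1) (hs0 : s 0 = 1) {q : ℝ} (h0 : 0 < q)
    (h1 : q < 1) :
    Filter.Tendsto (fun n : ℕ => ∑' k : ℤ, s k * (q ^ (2 ^ n)) ^ (k^2)) Filter.atTop (nhds 1) := by
  have e : (1:ℝ) = ∑' k : ℤ, if k = 0 then (1:ℝ) else 0 := by simp
  rw [e]
  have hq : ∀ n : ℕ, q ^ (2 ^ n) ≤ q := fun n =>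
    pow_le_of_le_one h0.le h1.le (by positivity)
  refine tendsto_tsum_of_dominated_convergence (gcr_sum3 h0 h1) (fun k => ?_)
    (Filter.Eventually.of_forall fun n k => ?_)
  · by_cases hk : k = 0
    · simp [hk, hs0]
    · rw [if_neg hk]
      have hp : 0 < k.natAbs ^ 2 := by positivity
      have e2 : ∀ x : ℝ, x ^ (k^2) = x ^ (k.natAbs ^ 2) := fun x => by
        rw [← zpow_natCast]; congr 1; simp
      simp_rw [e2]
      have t1 : Filter.Tendsto (fun n : ℕ => q ^ (2 ^ n)) Filter.atTop (nhds 0) :=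
        (tendsto_pow_atTop_nhds_zero_of_lt_one h0.le h1).comp
          (tendsto_pow_atTop_atTop_of_one_lt (by norm_num))
      have := (t1.pow (k.natAbs ^ 2)).const_mul (s k)
      simpa [zero_pow hp.ne', hk] using this
  · rw [norm_mul, Real.norm_eq_abs, hs, one_mul, Real.norm_of_nonneg (by positivity)]
    have e2 : ∀ x : ℝ, x ^ (k^2) = x ^ (k.natAbs ^ 2) := fun x => by
      rw [← zpow_natCast]; congr 1; simp
    rw [e2, e2]
    exact pow_le_pow_left₀ (by positivity) (hq n) _

theorem gcr_lim3 {q : ℝ} (h0 : 0 < q) (h1 : q < 1) :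
    Filter.Tendsto (fun n : ℕ => theta3 (q ^ (2 ^ n))) Filter.atTop (nhds 1) := by
  simpa [theta3] using gcr_lim (fun _ => 1) (by simp) rfl h0 h1

theorem gcr_lim4 {q : ℝ} (h0 : 0 < q) (h1 : q < 1) :
    Filter.Tendsto (fun n : ℕ => theta4 (q ^ (2 ^ n))) Filter.atTop (nhds 1) :=
  gcr_lim (fun k => (-1) ^ k) (fun k => by rw [abs_zpow]; simp) (by simp) h0 h1

theorem gcr_pos3 {q : ℝ} (h0 : 0 < q) (h1 : q < 1) : 0 < theta3 q :=
  (gcr_sum3 h0 h1).tsum_pos (fun k => by positivity) 0 (by positivity)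

theorem gcr_ne4 {q : ℝ} (h0 : 0 < q) (h1 : q < 1) : theta4 q ≠ 0 := by
  intro h
  have hz : ∀ n : ℕ, theta4 (q ^ (2 ^ n)) = 0 := by
    intro n
    induction n with
    | zero => simpa using h
    | succ n ih =>
      have := gcr_id2 (q := q ^ (2 ^ n)) (by positivity) (pow_lt_one₀ h0.le h1 (by positivity))
      rw [ih, mul_zero, ← pow_mul, ← pow_succ] at this
      exact pow_eq_zero_iff (two_ne_zero) |>.1 this.symm
  have := gcr_lim4 h0 h1
  simp_rw [hz] at this
  exact zero_ne_one (tendsto_nhds_unique tendsto_const_nhds this)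

theorem gcr_mod : theta3 (Real.exp (-Real.pi/2)) ^ 2 = 2 * theta3 (Real.exp (-Real.pi) ^ 2) ^ 2 := by
  have h := Real.tsum_exp_neg_mul_int_sq (a := 2) (by norm_num)
  have e1 : ∑' n : ℤ, Real.exp (-Real.pi * 2 * (n:ℝ)^2) = theta3 (Real.exp (-Real.pi) ^ 2) := by
    unfold theta3
    refine tsum_congr fun n => ?_
    rw [← Real.exp_nat_mul, ← Real.rpow_intCast, ← Real.exp_mul]
    congr 1; push_cast; ring
  have e2 : ∑' n : ℤ, Real.exp (-Real.pi / 2 * (n:ℝ)^2) = theta3 (Real.exp (-Real.pi/2)) := by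
    unfold theta3
    refine tsum_congr fun n => ?_
    rw [← Real.rpow_intCast, ← Real.exp_mul]
    congr 1; push_cast; ring
  rw [e1, e2, ← Real.sqrt_eq_rpow] at h
  rw [h, mul_pow, div_pow, Real.sq_sqrt (by norm_num)]
  ring

theorem gcr_ratio : (theta3 (Real.exp (-Real.pi)) ^ 2) ^ 2 = 2 * (theta4 (Real.exp (-Real.pi)) ^ 2) ^ 2 := by
  have hpi := Real.pi_pos
  have a0 := Real.exp_pos (-Real.pi/2)
  have a1 : Real.exp (-Real.pi/2) < 1 := by
    rw [← Real.exp_zero]; exact Real.exp_lt_exp.2 (by linarith)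
  have b0 := Real.exp_pos (-Real.pi)
  have b1 : Real.exp (-Real.pi) < 1 := by
    rw [← Real.exp_zero]; exact Real.exp_lt_exp.2 (by linarith)
  have e : Real.exp (-Real.pi/2) ^ 2 = Real.exp (-Real.pi) := by
    rw [← Real.exp_nat_mul]; congr 1; push_cast; ring
  have i1 := gcr_id1 a0 a1
  have i2 := gcr_id2 a0 a1
  have j1 := gcr_id1 b0 b1
  have m := gcr_mod
  rw [e] at i1 i2
  rw [← m] at j1
  have k : theta4 (Real.exp (-Real.pi / 2)) ^ 2
      = theta3 (Real.exp (-Real.pi)) ^ 2 - theta4 (Real.exp (-Real.pi)) ^ 2 := by linarith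
  have h4 : (theta4 (Real.exp (-Real.pi)) ^ 2) ^ 2 = (theta3 (Real.exp (-Real.pi)) ^ 2 +
    theta4 (Real.exp (-Real.pi)) ^ 2) * (theta3 (Real.exp (-Real.pi)) ^ 2 -
    theta4 (Real.exp (-Real.pi)) ^ 2) := by
    rw [← k, j1, ← i2]; ring
  linear_combination -h4

section
open MeasureTheory Set

noncomputable def gcrI (a b : ℝ) : ℝ := ∫ t : ℝ, (Real.sqrt ((t^2 + a^2) * (t^2 + b^2)))⁻¹

theorem gcrI_half (a b : ℝ) :
    gcrI a b = 2 * ∫ t in Ioi (0:ℝ), (Real.sqrt ((t^2 + a^2) * (t^2 + b^2)))⁻¹ := by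
  rw [← integral_comp_abs]; simp [gcrI]

theorem gcrI_agm {a b c : ℝ} (ha : 0 < a) (hb : 0 < b) (hc : c^2 = a * b) :
    gcrI ((a + b)/2) c = gcrI a b := by
  have hab : 0 < a * b := by positivity
  have hder : ∀ t ∈ Ioi (0:ℝ), HasDerivWithinAt (fun t : ℝ => (t - a*b*t⁻¹)/2)
      ((t^2 + a*b)/(2*t^2)) (Ioi 0) t := by
    intro t ht
    have ht' : t ≠ 0 := (mem_Ioi.1 ht).ne'
    have := (((hasDerivAt_id t).sub ((hasDerivAt_inv ht').const_mul (a*b))).div_const 2)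
    refine (this.congr_deriv ?_).hasDerivWithinAt
    field_simp
    ring
  have hinj : InjOn (fun t : ℝ => (t - a*b*t⁻¹)/2) (Ioi 0) := by
    intro x hx y hy h
    have hx' : 0 < x := hx
    have hy' : 0 < y := hy
    simp only at h
    field_simp at h
    have : (x - y) * (x * y + a * b) = 0 := by linear_combination h
    rcases mul_eq_zero.1 this with h | h
    · linarith
    · have : 0 < x * y + a * b := by positivity
      linarith
  have himg : (fun t : ℝ => (t - a*b*t⁻¹)/2) '' (Ioi 0) = univ := by
    refine eq_univ_of_forall fun u => ?_
    have hs : Real.sqrt (u^2 + a*b) ^ 2 = u^2 + a*b := Real.sq_sqrt (by positivity)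
    have hp : 0 < u + Real.sqrt (u^2 + a*b) := by
      have : |u| < Real.sqrt (u^2 + a*b) := by
        rw [← Real.sqrt_sq_eq_abs]
        exact Real.sqrt_lt_sqrt (by positivity) (by linarith)
      have := neg_abs_le u
      linarith
    refine ⟨u + Real.sqrt (u^2 + a*b), hp, ?_⟩
    simp only
    field_simp
    linear_combination hs
  have := integral_image_eq_integral_abs_deriv_smul measurableSet_Ioi hder hinj
    (fun u : ℝ => (Real.sqrt ((u^2 + ((a+b)/2)^2) * (u^2 + c^2)))⁻¹)
  rw [himg, setIntegral_univ] at this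
  rw [gcrI_half a b]
  unfold gcrI
  rw [this, ← integral_const_mul]
  refine setIntegral_congr_fun measurableSet_Ioi fun t ht => ?_
  have ht' : 0 < t := ht
  simp only [smul_eq_mul]
  rw [abs_of_pos (by positivity), hc]
  have e : ((((t - a*b*t⁻¹)/2)^2 + ((a+b)/2)^2) * (((t - a*b*t⁻¹)/2)^2 + a*b))
      = ((t^2 + a*b)/(4 * t^2))^2 * ((t^2+a^2)*(t^2+b^2)) := by
    field_simp
    ring
  rw [e, Real.sqrt_mul (by positivity), Real.sqrt_sq (by positivity)]
  have : 0 < Real.sqrt ((t^2+a^2)*(t^2+b^2)) := Real.sqrt_pos.2 (by positivity)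
  field_simp
  ring

theorem gcrI_one : gcrI 1 1 = Real.pi := by
  rw [← integral_univ_inv_one_add_sq]
  unfold gcrI
  congr 1; ext t
  rw [Real.sqrt_mul_self (by positivity)]
  ring

theorem gcrI_lim {a b : ℕ → ℝ} (ha : Filter.Tendsto a Filter.atTop (nhds 1))
    (hb : Filter.Tendsto b Filter.atTop (nhds 1)) :
    Filter.Tendsto (fun n => gcrI (a n) (b n)) Filter.atTop (nhds Real.pi) := by
  rw [← gcrI_one]
  unfold gcrI
  refine tendsto_integral_filter_of_dominated_convergence (fun t => 4 * (1 + t^2)⁻¹) ?_ ?_ ?_ ?_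
  · refine Filter.Eventually.of_forall fun n => ?_
    exact (Measurable.aestronglyMeasurable (by fun_prop))
  · filter_upwards [ha.eventually_const_lt (show (1/2:ℝ) < 1 by norm_num),
      hb.eventually_const_lt (show (1/2:ℝ) < 1 by norm_num)] with n h1 h2
    refine Filter.Eventually.of_forall fun t => ?_
    rw [Real.norm_of_nonneg (by positivity)]
    have e : 4 * (1 + t^2)⁻¹ = ((1 + t^2)/4)⁻¹ := by rw [inv_div]; ring
    rw [e]
    refine inv_anti₀ (by positivity) (Real.le_sqrt_of_sq_le ?_)
    rw [sq]
    have := sq_nonneg t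
    refine mul_le_mul (by nlinarith) (by nlinarith) (by positivity) (by positivity)
  · exact integrable_inv_one_add_sq.const_mul 4
  · refine Filter.Eventually.of_forall fun t => ?_
    have hc : Filter.Tendsto (fun n => Real.sqrt ((t^2 + (a n)^2) * (t^2 + (b n)^2))) Filter.atTop
        (nhds (Real.sqrt ((t^2 + 1^2) * (t^2 + 1^2)))) :=
      ((((ha.pow 2).const_add _).mul ((hb.pow 2).const_add _))).sqrt
    exact hc.inv₀ (Real.sqrt_pos.2 (by positivity)).ne'

theorem gcrI_scale {b : ℝ} (hb : 0 < b) {a : ℝ} (h : a^2 = 2 * b^2) :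
    b * gcrI a b = ∫ t : ℝ, (Real.sqrt ((t^2 + 2) * (t^2 + 1)))⁻¹ := by
  have := Measure.integral_comp_mul_left (fun t : ℝ => (Real.sqrt ((t^2 + a^2) * (t^2 + b^2)))⁻¹) b
  unfold gcrI
  rw [abs_of_pos (by positivity), smul_eq_mul] at this
  have h2 : b^2 * ∫ x : ℝ, (Real.sqrt (((b * x)^2 + a^2) * ((b * x)^2 + b^2)))⁻¹
      = ∫ t : ℝ, (Real.sqrt ((t^2 + 2) * (t^2 + 1)))⁻¹ := by
    rw [← integral_const_mul]
    congr 1; ext t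
    have e : ((b * t)^2 + a^2) * ((b * t)^2 + b^2) = (b^2)^2 * ((t^2+2)*(t^2+1)) := by rw [h]; ring
    rw [e, Real.sqrt_mul (by positivity), Real.sqrt_sq (by positivity)]
    have : 0 < Real.sqrt ((t^2+2)*(t^2+1)) := Real.sqrt_pos.2 (by positivity)
    field_simp
  rw [← h2, this]
  field_simp

theorem gcr_beta : ∫ y in Ioo (0:ℝ) 1, y ^ (-(3/4):ℝ) * (1 - y) ^ (-(1/2):ℝ)
    = Real.Gamma (1/4) * Real.Gamma (1/2) / Real.Gamma (3/4) := by
  have h := ProbabilityTheory.beta_eq_betaIntegralReal (1/4) (1/2) (by norm_num) (by norm_num)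
  have e : (ProbabilityTheory.beta (1/4) (1/2)) = Real.Gamma (1/4) * Real.Gamma (1/2) / Real.Gamma (3/4) := by
    unfold ProbabilityTheory.beta; norm_num
  rw [← e, h, Complex.betaIntegral, intervalIntegral.integral_of_le zero_le_one,
    ← integral_Ioc_eq_integral_Ioo]
  have h2 : ∫ x in Ioc (0:ℝ) 1, (x:ℂ) ^ (((1/4:ℝ):ℂ) - 1) * (1 - (x:ℂ)) ^ (((1/2:ℝ):ℂ) - 1)
      = ∫ x in Ioc (0:ℝ) 1, ((x ^ (-(3/4):ℝ) * (1 - x) ^ (-(1/2):ℝ) : ℝ) : ℂ) := by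
    refine setIntegral_congr_fun measurableSet_Ioc fun x hx => ?_
    rw [Complex.ofReal_mul, Complex.ofReal_cpow hx.1.le, Complex.ofReal_cpow (by linarith [hx.2])]
    push_cast
    norm_num
  rw [h2, integral_complex_ofReal, Complex.ofReal_re]

theorem gcr_J : ∫ t : ℝ, (Real.sqrt ((t^2 + 2) * (t^2 + 1)))⁻¹
    = Real.Gamma (1/4) * Real.Gamma (1/2) / Real.Gamma (3/4) / 2 := by
  have h1 : ∫ t : ℝ, (Real.sqrt ((t^2 + 2) * (t^2 + 1)))⁻¹
      = 2 * ∫ t in Ioi (0:ℝ), (Real.sqrt ((t^2 + 2) * (t^2 + 1)))⁻¹ := by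
    rw [← integral_comp_abs]; simp
  have hder : ∀ t ∈ Ioi (0:ℝ), HasDerivWithinAt (fun t : ℝ => ((1 + t^2)^2)⁻¹)
      (-(4 * t) / (1+t^2)^3) (Ioi 0) t := by
    intro t ht
    have h0 : HasDerivAt (fun t : ℝ => 1 + t^2) (2 * t) t := by
      simpa using (hasDerivAt_pow 2 t).const_add 1
    have := (h0.fun_pow 2).fun_inv (by positivity)
    refine (this.congr_deriv ?_).hasDerivWithinAt
    field_simp
    ring
  have hinj : InjOn (fun t : ℝ => ((1 + t^2)^2)⁻¹) (Ioi 0) := by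
    intro x hx y hy h
    have hx' : 0 < x := hx
    have hy' : 0 < y := hy
    have h' := inv_injective h
    have h2 := (pow_left_inj₀ (by positivity) (by positivity) two_ne_zero).1 h'
    exact (pow_left_inj₀ hx'.le hy'.le two_ne_zero).1 (by linarith)
  have himg : (fun t : ℝ => ((1 + t^2)^2)⁻¹) '' (Ioi 0) = Ioo 0 1 := by
    ext y
    constructor
    · rintro ⟨t, ht, rfl⟩
      have ht' : 0 < t := ht
      refine ⟨by positivity, inv_lt_one_of_one_lt₀ ?_⟩
      have : 0 < t^2 := by positivity
      nlinarith
    · rintro ⟨hy0, hy1⟩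
      have hs : 1 < Real.sqrt (y⁻¹) := by
        rw [Real.lt_sqrt (by norm_num)]
        simpa using (one_lt_inv₀ hy0).2 hy1
      refine ⟨Real.sqrt (Real.sqrt y⁻¹ - 1), Real.sqrt_pos.2 (by linarith), ?_⟩
      simp only
      rw [Real.sq_sqrt (by linarith), add_sub_cancel, Real.sq_sqrt (by positivity), inv_inv]
  have := integral_image_eq_integral_abs_deriv_smul measurableSet_Ioi hder hinj
    (fun y : ℝ => y ^ (-(3/4):ℝ) * (1 - y) ^ (-(1/2):ℝ))
  rw [himg, gcr_beta] at this
  rw [this, h1]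
  have h3 : ∫ x in Ioi (0:ℝ), |(-(4 * x) / (1+x^2)^3)| • ((((1 + x^2)^2)⁻¹) ^ (-(3/4):ℝ) * (1 - ((1 + x^2)^2)⁻¹) ^ (-(1/2):ℝ))
     = ∫ x in Ioi (0:ℝ), 4 * (Real.sqrt ((x^2 + 2) * (x^2 + 1)))⁻¹ := by
    refine setIntegral_congr_fun measurableSet_Ioi fun t ht => ?_
    have ht' : 0 < t := ht
    have hu : 0 < 1 + t^2 := by positivity
    simp only [smul_eq_mul]
    have e1 : |(-(4 * t) / (1+t^2)^3)| = 4 * t / (1+t^2)^3 := by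
      rw [neg_div, abs_neg, abs_of_pos (by positivity)]
    have e2 : (((1 + t^2)^2)⁻¹) ^ (-(3/4):ℝ) = (1+t^2) * Real.sqrt (1+t^2) := by
      rw [Real.inv_rpow (by positivity), Real.rpow_neg (by positivity), inv_inv,
        ← Real.rpow_natCast, ← Real.rpow_mul hu.le, Real.sqrt_eq_rpow]
      nth_rewrite 2 [← Real.rpow_one (1+t^2)]
      rw [← Real.rpow_add hu]
      norm_num
    have e3 : (1 - ((1 + t^2)^2)⁻¹) = (t / (1+t^2))^2 * (t^2+2) := by
      field_simp
      ring
    have e4 : (1 - ((1 + t^2)^2)⁻¹) ^ (-(1/2):ℝ) = (t / (1+t^2) * Real.sqrt (t^2+2))⁻¹ := by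
      rw [e3, Real.rpow_neg (by positivity), ← Real.sqrt_eq_rpow, Real.sqrt_mul (by positivity),
        Real.sqrt_sq (by positivity)]
    rw [e1, e2, e4, Real.sqrt_mul (by positivity), add_comm (t^2) 1]
    have p1 : 0 < Real.sqrt (t^2+2) := Real.sqrt_pos.2 (by positivity)
    have p2 : 0 < Real.sqrt (1+t^2) := Real.sqrt_pos.2 (by positivity)
    have p3 : Real.sqrt (1+t^2)^2 = 1 + t^2 := Real.sq_sqrt hu.le
    field_simp
    try rw [p3]
    try ring
  rw [h3, integral_const_mul]
  ring

end

theorem gcrI_theta {q : ℝ} (h0 : 0 < q) (h1 : q < 1) :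
    gcrI (theta3 q ^ 2) (theta4 q ^ 2) = Real.pi := by
  have hc : ∀ n : ℕ, gcrI (theta3 (q ^ (2 ^ n)) ^ 2) (theta4 (q ^ (2 ^ n)) ^ 2)
      = gcrI (theta3 q ^ 2) (theta4 q ^ 2) := by
    intro n
    induction n with
    | zero => simp
    | succ n ih =>
      have k0 : 0 < q ^ (2 ^ n) := by positivity
      have k1 : q ^ (2 ^ n) < 1 := pow_lt_one₀ h0.le h1 (by positivity)
      have hp := gcr_pos3 k0 k1
      have hn := gcr_ne4 k0 k1
      have i1 := gcr_id1 k0 k1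
      have i2 := gcr_id2 k0 k1
      have e : q ^ (2 ^ (n+1)) = (q ^ (2 ^ n)) ^ 2 := by rw [← pow_mul, ← pow_succ]
      have key := gcrI_agm (a := theta3 (q ^ (2 ^ n)) ^ 2) (b := theta4 (q ^ (2 ^ n)) ^ 2)
        (c := theta4 ((q ^ (2 ^ n)) ^ 2) ^ 2) (by positivity) (by positivity)
        (by rw [← i2, mul_pow])
      rw [← ih, e, ← key, i1, mul_div_cancel_left₀ _ (two_ne_zero)]
  have hl := gcrI_lim (by simpa using (gcr_lim3 h0 h1).pow 2) (by simpa using (gcr_lim4 h0 h1).pow 2)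
  simp_rw [hc] at hl
  exact tendsto_nhds_unique tendsto_const_nhds hl

theorem gauss_constant_relation :
    2 * theta4 (Real.exp (-Real.pi)) ^ 2 =
        Real.Gamma (1/4) / (Real.Gamma (1/2) * Real.Gamma (3/4)) ∧
    theta4 (Real.exp (-Real.pi)) ^ 2 =
        Real.Gamma (1/4) / (2 * Real.Gamma (1/2) * Real.Gamma (3/4)) := by
  have hpi := Real.pi_pos
  have b0 := Real.exp_pos (-Real.pi)
  have b1 : Real.exp (-Real.pi) < 1 := Real.exp_lt_one_iff.2 (by linarith)
  have hB : 0 < theta4 (Real.exp (-Real.pi)) ^ 2 := by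
    have := gcr_ne4 b0 b1
    positivity
  have hI := gcrI_theta b0 b1
  have hs := gcrI_scale hB gcr_ratio
  rw [hI, gcr_J] at hs
  have g1 : Real.Gamma (1/2) ^ 2 = Real.pi := by
    rw [Real.Gamma_one_half_eq, Real.sq_sqrt hpi.le]
  have p2 : 0 < Real.Gamma (1/2) := Real.Gamma_pos_of_pos (by norm_num)
  have p3 : 0 < Real.Gamma (3/4) := Real.Gamma_pos_of_pos (by norm_num)
  have main : theta4 (Real.exp (-Real.pi)) ^ 2 =
      Real.Gamma (1/4) / (2 * Real.Gamma (1/2) * Real.Gamma (3/4)) := by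
    generalize theta4 (Real.exp (-Real.pi)) ^ 2 = B at hs ⊢
    rw [← g1] at hs
    rw [div_div, eq_div_iff (by positivity)] at hs
    rw [eq_div_iff (by positivity)]
    refine mul_right_cancel₀ p2.ne' ?_
    linear_combination hs
  refine ⟨?_, main⟩
  rw [main]
  field_simp
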